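/- Fix n ≥ 1. The diagonal Ramanujan sum c_d(n/d) takes only values in {0, 1, -1} for every divisor d of n if and only if n is squarefree or n = 4m for some odd squarefree integer m. -/

import Mathlib

/-- The Ramanujan sum `c_d(r)`: the sum of the `r`-th powers of all primitive
`d`-th roots of unity. -/
noncomputable def ramanujanSum (d r : ℕ) : ℂ :=
  ∑ m ∈ (Finset.range d).filter (fun m => Nat.gcd m d = 1),
    Complex.exp (2 * Real.pi * Complex.I * ((m : ℂ) * (r : ℂ) / (d : ℂ)))

/-!
The map `z ↦ z ^ r` sends the primitive `d`-th roots of unity onto the primitive `e`-th ones, where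
`e = d / gcd(d, r)`, and all its fibres have the same size because the `a`-th powers with `a` prime
to `d` permute the source and act transitively on the target. As the primitive `e`-th roots sum to
`μ(e)`, this gives Hölder's formula `φ(e) c_d(r) = φ(d) μ(e)`. Hence `c_d(r) ∈ {0, 1, -1}` exactly
when `e` is not squarefree or `φ(e) = φ(d)`. For `r = n / d`, taking `d² ∣ n` gives `e = 1` and
forces `d ∣ 2`, and `d = 4` excludes `8 ∣ n`; these two constraints on `n` are also sufficient.
-/

open Finset Polynomial

open scoped Nat ArithmeticFunction.Moebius

theorem exists_coprime_modEq_of_dvd {d e i : ℕ} [NeZero d] (hed : e ∣ d) (hi : i.Coprime e) :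
    ∃ a, a.Coprime d ∧ a ≡ i [MOD e] := by
  obtain ⟨v, hv⟩ := ZMod.unitsMap_surjective hed (ZMod.unitOfCoprime i hi)
  refine ⟨(v : ZMod d).val, ZMod.val_coe_unit_coprime v, ?_⟩
  rw [← ZMod.natCast_eq_natCast_iff, ← ZMod.coe_unitOfCoprime i hi, ← hv]
  simp [ZMod.unitsMap_val]

theorem isPrimitiveRoot_pow_div_gcd {M : Type*} [CommMonoid M] {d : ℕ} {ζ : M} (hd : d ≠ 0)
    (hζ : IsPrimitiveRoot ζ d) (r : ℕ) : IsPrimitiveRoot (ζ ^ r) (d / d.gcd r) := by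
  rw [IsPrimitiveRoot.iff_orderOf, (hζ.isOfFinOrder hd).orderOf_pow, ← hζ.eq_orderOf]

section PrimitiveRoots

variable {R : Type*} [CommRing R] [IsDomain R] {d : ℕ} {ζ : R}

theorem sum_nthRootsFinset_one (hζ : IsPrimitiveRoot ζ d) :
    ∑ z ∈ nthRootsFinset d (1 : R), z = if d = 1 then 1 else 0 := by
  classical
  have sum_eq_geom_sum : ∑ z ∈ nthRootsFinset d (1 : R), z = ∑ i ∈ range d, ζ ^ i := by
    rw [nthRootsFinset_def, sum_eq_multiset_sum, Multiset.map_id', Multiset.toFinset_val,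
      Multiset.dedup_eq_self.2 hζ.nthRoots_one_nodup, hζ.nthRoots_eq (one_pow d)]
    simp [Finset.sum]
  rw [sum_eq_geom_sum]
  rcases lt_trichotomy d 1 with hd | rfl | hd
  · simp [Nat.lt_one_iff.1 hd]
  · simp
  · rw [hζ.geom_sum_eq_zero hd, if_neg hd.ne']

theorem sum_primitiveRoots_eq_moebius (hζ : IsPrimitiveRoot ζ d) :
    ∑ z ∈ primitiveRoots d R, z = μ d := by
  classical
  rcases d.eq_zero_or_pos with rfl | hd
  · simp
  have sum_divisors : ∀ m > 0, m ∈ {m | m ∣ d} →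
      ∑ i ∈ m.divisors, ∑ z ∈ primitiveRoots i R, z = if m = 1 then 1 else 0 := by
    rintro m - ⟨k, rfl⟩
    rw [← sum_nthRootsFinset_one (hζ.pow hd (mul_comm m k)),
      IsPrimitiveRoot.nthRoots_one_eq_biUnion_primitiveRoots,
      sum_biUnion fun i _ j _ hij => IsPrimitiveRoot.disjoint hij]
  rw [← (ArithmeticFunction.sum_eq_iff_sum_mul_moebius_eq_on {m | m ∣ d}
      fun _ _ => dvd_trans).1 sum_divisors d hd dvd_rfl,
    Nat.sum_divisorsAntidiagonal' fun a b => (μ a : R) * if b = 1 then 1 else 0]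
  simp [hd.ne']

theorem pow_mem_primitiveRoots_div_gcd (hζ : ζ ∈ primitiveRoots d R) (r : ℕ) :
    ζ ^ r ∈ primitiveRoots (d / d.gcd r) R := by
  rcases d.eq_zero_or_pos with rfl | hd
  · simp at hζ
  · exact (mem_primitiveRoots (Nat.div_gcd_pos_of_pos_left r hd)).2
      (isPrimitiveRoot_pow_div_gcd hd.ne' ((mem_primitiveRoots hd).1 hζ) r)

variable [NeZero d]

theorem card_primitiveRoots_pow_eq_le_of_coprime [DecidableEq R] {a : ℕ}
    (ha : a.Coprime d) (r : ℕ) (w : R) :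
    #{z ∈ primitiveRoots d R | z ^ r = w} ≤ #{z ∈ primitiveRoots d R | z ^ r = w ^ a} := by
  let powEquiv := IsPrimitiveRoot.primitiveRootsPowEquivOfCoprime (R := R) ha
  refine card_le_card_of_injOn (· ^ a) (fun z hz => ?_) fun y hy z hz hyz => ?_
  · obtain ⟨hzd, rfl⟩ := mem_filter.1 (mem_coe.1 hz)
    exact mem_filter.2 ⟨(powEquiv ⟨z, hzd⟩).2, pow_right_comm z a r⟩
  · have hy := (mem_filter.1 hy).1
    have hz := (mem_filter.1 hz).1
    have := powEquiv.injective (a₁ := ⟨y, hy⟩) (a₂ := ⟨z, hz⟩) (Subtype.ext hyz)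
    exact congrArg Subtype.val this

theorem card_primitiveRoots_pow_eq_le [DecidableEq R] {e r : ℕ} (hed : e ∣ d) {v w : R}
    (hv : IsPrimitiveRoot v e) (hw : IsPrimitiveRoot w e) :
    #{z ∈ primitiveRoots d R | z ^ r = v} ≤ #{z ∈ primitiveRoots d R | z ^ r = w} := by
  have : NeZero e := ⟨ne_zero_of_dvd_ne_zero (NeZero.ne d) hed⟩
  obtain ⟨i, -, hi, rfl⟩ := hv.isPrimitiveRoot_iff.1 hw
  obtain ⟨a, ha, hai⟩ := exists_coprime_modEq_of_dvd hed hi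
  rw [← pow_eq_pow_of_modEq hai hv.pow_eq_one]
  exact card_primitiveRoots_pow_eq_le_of_coprime ha r v

theorem totient_mul_card_primitiveRoots_pow_eq [DecidableEq R]
    (hζ : IsPrimitiveRoot ζ d) {r : ℕ} {w : R} (hw : IsPrimitiveRoot w (d / d.gcd r)) :
    φ (d / d.gcd r) * #{z ∈ primitiveRoots d R | z ^ r = w} = φ d := by
  have hed : d / d.gcd r ∣ d := Nat.div_dvd_of_dvd (d.gcd_dvd_left r)
  have card_eq : ∀ v ∈ primitiveRoots (d / d.gcd r) R,
      #{z ∈ primitiveRoots d R | z ^ r = v} = #{z ∈ primitiveRoots d R | z ^ r = w} := fun v hv =>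
    have hv := isPrimitiveRoot_of_mem_primitiveRoots hv
    le_antisymm (card_primitiveRoots_pow_eq_le hed hv hw)
      (card_primitiveRoots_pow_eq_le hed hw hv)
  rw [← hζ.card_primitiveRoots,
    card_eq_sum_card_fiberwise fun z hz => pow_mem_primitiveRoots_div_gcd hz r,
    sum_congr rfl card_eq, sum_const, smul_eq_mul, hw.card_primitiveRoots]

theorem totient_mul_sum_primitiveRoots_pow (hζ : IsPrimitiveRoot ζ d) (r : ℕ) :
    (φ (d / d.gcd r) : R) * ∑ z ∈ primitiveRoots d R, z ^ r = φ d * μ (d / d.gcd r) := by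
  classical
  calc (φ (d / d.gcd r) : R) * ∑ z ∈ primitiveRoots d R, z ^ r
      = ∑ w ∈ primitiveRoots (d / d.gcd r) R,
          φ (d / d.gcd r) * (#{z ∈ primitiveRoots d R | z ^ r = w} * w) := by
        rw [← sum_fiberwise_of_maps_to'
          (fun z hz => pow_mem_primitiveRoots_div_gcd hz r) fun w => w, mul_sum]
        simp only [sum_const, nsmul_eq_mul]
    _ = ∑ w ∈ primitiveRoots (d / d.gcd r) R, φ d * w := by
        refine sum_congr rfl fun w hw => ?_
        rw [← mul_assoc, ← Nat.cast_mul, totient_mul_card_primitiveRoots_pow_eq hζ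
          (isPrimitiveRoot_of_mem_primitiveRoots hw)]
    _ = φ d * μ (d / d.gcd r) := by
        rw [← mul_sum,
          sum_primitiveRoots_eq_moebius (isPrimitiveRoot_pow_div_gcd (NeZero.ne d) hζ r)]

end PrimitiveRoots

theorem ramanujanSum_eq_sum_primitiveRoots (d r : ℕ) :
    ramanujanSum d r = ∑ z ∈ primitiveRoots d ℂ, z ^ r := by
  rcases d.eq_zero_or_pos with rfl | hd
  · simp [ramanujanSum]
  have hζ := Complex.isPrimitiveRoot_exp d hd.ne'
  refine sum_bij (fun m _ => Complex.exp (2 * Real.pi * Complex.I / d) ^ m) ?_ ?_ ?_ ?_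
  · exact fun m hm => (mem_primitiveRoots hd).2 (hζ.pow_of_coprime m (mem_filter.1 hm).2)
  · intro m hm k hk
    exact hζ.pow_inj (mem_range.1 (mem_filter.1 hm).1) (mem_range.1 (mem_filter.1 hk).1)
  · intro z hz
    have : NeZero d := ⟨hd.ne'⟩
    obtain ⟨m, hmd, hm, rfl⟩ := hζ.isPrimitiveRoot_iff.1 ((mem_primitiveRoots hd).1 hz)
    exact ⟨m, mem_filter.2 ⟨mem_range.2 hmd, hm⟩, rfl⟩
  · intro m _
    rw [← pow_mul, ← Complex.exp_nat_mul]
    congr 1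
    push_cast
    ring

/-- Hölder's formula for Ramanujan sums, with the denominator `φ (d / gcd(d, r))` cleared. -/
theorem totient_mul_ramanujanSum (d r : ℕ) :
    (φ (d / d.gcd r) : ℂ) * ramanujanSum d r = φ d * μ (d / d.gcd r) := by
  rcases eq_zero_or_neZero d with rfl | hd
  · simp
  rw [ramanujanSum_eq_sum_primitiveRoots]
  exact totient_mul_sum_primitiveRoots_pow (Complex.isPrimitiveRoot_exp d hd.ne) r

theorem ramanujanSum_eq_zero_or_one_or_neg_one_iff {d : ℕ} (hd : 0 < d) (r : ℕ) :
    (ramanujanSum d r = 0 ∨ ramanujanSum d r = 1 ∨ ramanujanSum d r = -1) ↔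
      (Squarefree (d / d.gcd r) → φ (d / d.gcd r) = φ d) := by
  have he : 0 < d / d.gcd r := Nat.div_gcd_pos_of_pos_left r hd
  have hφd : (φ d : ℂ) ≠ 0 := Nat.cast_ne_zero.2 (Nat.totient_pos.2 hd).ne'
  have hφe : (φ (d / d.gcd r) : ℂ) ≠ 0 := Nat.cast_ne_zero.2 (Nat.totient_pos.2 he).ne'
  have hölder := totient_mul_ramanujanSum d r
  constructor
  · intro hvalue hsq
    have hμ : μ (d / d.gcd r) ≠ 0 := ArithmeticFunction.moebius_ne_zero_iff_squarefree.2 hsq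
    have hne : ramanujanSum d r ≠ 0 :=
      right_ne_zero_of_mul (hölder ▸ mul_ne_zero hφd (Int.cast_ne_zero.2 hμ))
    have norm_sum : ‖ramanujanSum d r‖ = 1 := by
      rcases hvalue.resolve_left hne with h | h <;> simp [h]
    have norm_moebius : ‖(μ (d / d.gcd r) : ℂ)‖ = 1 := by
      rw [Complex.norm_intCast]
      exact_mod_cast ArithmeticFunction.abs_moebius_eq_one_of_squarefree hsq
    have norm_hölder := congrArg norm hölder
    rw [norm_mul, norm_mul, norm_sum, norm_moebius, mul_one, mul_one, Complex.norm_natCast,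
      Complex.norm_natCast] at norm_hölder
    exact_mod_cast norm_hölder
  · intro htotient
    by_cases hsq : Squarefree (d / d.gcd r)
    · rw [htotient hsq] at hölder
      rw [mul_left_cancel₀ hφd hölder]
      exact_mod_cast ArithmeticFunction.moebius_eq_or (d / d.gcd r)
    · rw [ArithmeticFunction.moebius_eq_zero_of_not_squarefree hsq] at hölder
      simpa [hφe] using Or.inl hölder

theorem totient_div_gcd_eq_of_gcd_dvd_two {d r : ℕ} (hg : d.gcd r ∣ 2) (h8 : ¬ 8 ∣ d * r) :
    φ (d / d.gcd r) = φ d := by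
  rcases (Nat.dvd_prime Nat.prime_two).1 hg with hg | hg
  · rw [hg, Nat.div_one]
  · obtain ⟨e, rfl⟩ : 2 ∣ d := hg ▸ d.gcd_dvd_left r
    obtain ⟨k, rfl⟩ : 2 ∣ r := hg ▸ (2 * e).gcd_dvd_right r
    have he : Odd e := by
      by_contra he
      obtain ⟨c, rfl⟩ := (Nat.not_odd_iff_even.1 he).two_dvd
      exact h8 ⟨c * k, by ring⟩
    rw [hg, Nat.mul_div_cancel_left e two_pos, Nat.totient_two_mul_of_odd he]

theorem forall_dvd_totient_div_gcd_eq_iff {n : ℕ} (hn : n ≠ 0) :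
    (∀ d, d ∣ n → Squarefree (d / d.gcd (n / d)) → φ (d / d.gcd (n / d)) = φ d) ↔
      (∀ b, b * b ∣ n → b ∣ 2) ∧ ¬ 8 ∣ n := by
  constructor
  · intro h
    refine ⟨fun b hb => ?_, ?_⟩
    · have hbn : b ∣ n := dvd_of_mul_left_dvd hb
      have hb0 : 0 < b := Nat.pos_of_dvd_of_pos hbn hn.bot_lt
      have hg : b.gcd (n / b) = b := Nat.gcd_eq_left ((Nat.dvd_div_iff_mul_dvd hbn).2 hb)
      have hb1 := h b hbn
      rw [hg, Nat.div_self hb0] at hb1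
      exact Nat.dvd_two_of_totient_le_one hb0 (hb1 squarefree_one).ge
    · rintro ⟨k, rfl⟩
      have hdvd : 4 / Nat.gcd 4 (8 * k / 4) ∣ 2 := by
        have h2 : 2 ∣ Nat.gcd 4 (8 * k / 4) := Nat.dvd_gcd (by decide) (by lia)
        have hg : 0 < Nat.gcd 4 (8 * k / 4) := Nat.gcd_pos_of_pos_left _ four_pos
        exact (Nat.div_dvd_iff_dvd_mul (Nat.gcd_dvd_left _ _) hg).2 (Nat.mul_dvd_mul_right h2 2)
      have htotient := h 4 ⟨2 * k, by ring⟩ (Nat.prime_two.squarefree.squarefree_of_dvd hdvd)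
      have : φ 4 ∣ φ 2 := htotient ▸ Nat.totient_dvd_of_dvd hdvd
      exact absurd this (by decide)
  · rintro ⟨hsq, h8⟩ d ⟨r, rfl⟩ -
    rw [Nat.mul_div_cancel_left r (Nat.pos_of_ne_zero (left_ne_zero_of_mul hn))]
    exact totient_div_gcd_eq_of_gcd_dvd_two
      (hsq _ (Nat.mul_dvd_mul (d.gcd_dvd_left r) (d.gcd_dvd_right r))) h8

theorem dvd_of_mul_self_dvd_mul_self_mul_squarefree {a b m : ℕ} (hm : Squarefree m)
    (h : b * b ∣ a * a * m) : b ∣ a := by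
  rcases a.eq_zero_or_pos with rfl | ha
  · exact dvd_zero b
  obtain ⟨g, b', a', hg, hcop, rfl, rfl⟩ := Nat.exists_coprime' (Nat.gcd_pos_of_pos_right b ha)
  have hb' : b' * b' ∣ a' * a' * m := by
    refine Nat.dvd_of_mul_dvd_mul_left (Nat.mul_pos hg hg) ?_
    convert h using 1 <;> ring
  have hcop_sq : (b' * b').Coprime (a' * a') :=
    (hcop.mul_left hcop).mul_right (hcop.mul_left hcop)
  rw [Nat.isUnit_iff.1 (hm b' (hcop_sq.dvd_of_dvd_mul_left hb')), one_mul]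
  exact dvd_mul_left g a'

theorem squarefree_of_forall_mul_self_dvd_imp_dvd_two {n : ℕ} (h : ∀ b, b * b ∣ n → b ∣ 2)
    (h4 : ¬ 4 ∣ n) : Squarefree n := by
  intro b hb
  rcases (Nat.dvd_prime Nat.prime_two).1 (h b hb) with rfl | rfl
  · exact isUnit_one
  · exact absurd hb h4

theorem forall_mul_self_dvd_imp_dvd_two_and_not_eight_dvd_iff (n : ℕ) :
    ((∀ b, b * b ∣ n → b ∣ 2) ∧ ¬ 8 ∣ n) ↔
      (Squarefree n ∨ ∃ m, Odd m ∧ Squarefree m ∧ n = 4 * m) := by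
  constructor
  · rintro ⟨hsq, h8⟩
    by_cases h4 : 4 ∣ n
    · obtain ⟨m, rfl⟩ := h4
      have hm : Odd m := by grind
      exact .inr ⟨m, hm, squarefree_of_forall_mul_self_dvd_imp_dvd_two
        (fun b hb => hsq b (hb.mul_left 4)) (by grind), rfl⟩
    · exact .inl (squarefree_of_forall_mul_self_dvd_imp_dvd_two hsq h4)
  · rintro (hn | ⟨m, hodd, hm, rfl⟩)
    · exact ⟨fun b hb => (hn b hb).dvd, fun h8 => by simpa using hn 2 (dvd_trans (by decide) h8)⟩
    · exact ⟨fun b hb => dvd_of_mul_self_dvd_mul_self_mul_squarefree hm hb, by grind⟩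

theorem stmt_3 (n : ℕ) (hn : 1 ≤ n) :
    (∀ d : ℕ, d ∣ n → ramanujanSum d (n / d) = 0 ∨ ramanujanSum d (n / d) = 1 ∨
      ramanujanSum d (n / d) = -1) ↔
    (Squarefree n ∨ ∃ m : ℕ, Odd m ∧ Squarefree m ∧ n = 4 * m) := by
  rw [← forall_mul_self_dvd_imp_dvd_two_and_not_eight_dvd_iff,
    ← forall_dvd_totient_div_gcd_eq_iff (Nat.ne_of_gt hn)]
  exact forall₂_congr fun d hd =>
    ramanujanSum_eq_zero_or_one_or_neg_one_iff (Nat.pos_of_dvd_of_pos hd hn) (n / d)
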